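/- arXiv:1608.06728 — 3 statements merged into one kernel-verified Lean document; each statement's English description precedes it below -/
import Mathlib

section
/- There exists a constant C > 0, depending only on ψ, such that for every dyadic interval I ⊆ [0,1), ∫_{x=0}^{1} ∫_{y=0}^{∞} |G_I(x+iy)|² (1-e^{-4πy}) e^{-2πy} dy dx ≤ C |I|. (Equivalently, ∫_𝔻 |g_I(w)|² (1-|w|²) dA(w) ≤ C' |I|, where g_I is the harmonic extension to 𝔻 of the periodization of f_I.) -/
open MeasureTheory Complex Real
open scoped FourierTransform

noncomputable section

/-- The length `|I| = 2^{-j}` of a dyadic interval of generation `j`. -/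
def len (j : ℤ) : ℝ := (2 : ℝ) ^ (-j)

/-- The center `C_I = 2^{-j}(k + 1/2)` of the dyadic interval `I = [2^{-j}k, 2^{-j}(k+1))`. -/
def ctr (j k : ℤ) : ℝ := (2 : ℝ) ^ (-j) * ((k : ℝ) + 1 / 2)

/-- `ψ_I(x) = |I|^{-1/2} ψ((x - C_I)/|I|)`. -/
def psiI (ψ : SchwartzMap ℝ ℂ) (j k : ℤ) (x : ℝ) : ℂ :=
  (((Real.sqrt (len j))⁻¹ : ℝ) : ℂ) * ψ ((x - ctr j k) / len j)

/-- The Poisson extension to the upper half-plane of `f_I = |I|^{1/2} D ψ_I`, where `D` is the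
Fourier multiplier with symbol `4π|ξ|`:
`F_I(x+iy) = ∫ 4π|ξ| |I|^{1/2} ψ̂_I(ξ) e^{-2π|ξ|y} e^{2πixξ} dξ`. -/
def FI (ψ : SchwartzMap ℝ ℂ) (j k : ℤ) (x y : ℝ) : ℂ :=
  ∫ ξ : ℝ, ((4 * π * |ξ| * Real.sqrt (len j) * Real.exp (-(2 * π * |ξ| * y)) : ℝ) : ℂ) *
    𝓕 (psiI ψ j k) ξ * Complex.exp (2 * (π : ℂ) * Complex.I * (x : ℂ) * (ξ : ℂ))

/-- The periodization `G_I(x+iy) = Σ_{k∈ℤ} F_I(x-k+iy)`. -/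
def GI (ψ : SchwartzMap ℝ ℂ) (j k : ℤ) (x y : ℝ) : ℂ :=
  ∑' m : ℤ, FI ψ j k (x - (m : ℝ)) y

/-!
Put `h = |I|^{1/2} ψ̂_I`. Then `F_I(· + iy)` is the inverse Fourier transform of
`4π|ξ| e^{-2π|ξ|y} h(ξ)`, a smooth function because `h` vanishes near `0`, where `|ξ|` is not
smooth. By Poisson summation `G_I(· + iy)` is the Fourier series with coefficients
`4π|n| e^{-2π|n|y} h(n)`, and Parseval's identity in `x` turns the area integral into
`∑ₙ |h(n)|² ∫₀^∞ (4πn)² e^{-4π|n|y} (1 - e^{-4πy}) e^{-2πy} dy`, where every `y`-integral is at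
most `4π`. If `ψ̂` is bounded by `M` and vanishes outside `[-R, R]`, then
`|h(n)| = |I| |ψ̂(|I|n)| ≤ M|I|`, and at most `2R / |I|` nonzero integers contribute, so the area
integral is at most `8πRM²|I|`.
-/

open AddCircle Filter Topology
open scoped ContDiff

section TrigonometricPolynomials

variable {T : ℝ} [Fact (0 < T)]

lemma integral_norm_sq_sum_mul_fourier (S : Finset ℤ) (a : ℤ → ℂ) :
    ∫ t : AddCircle T, ‖∑ n ∈ S, a n * fourier n t‖ ^ 2 ∂haarAddCircle = ∑ n ∈ S, ‖a n‖ ^ 2 := by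
  let P : C(AddCircle T, ℂ) := ∑ n ∈ S, a n • fourier n
  have hP : P.toLp 2 haarAddCircle ℂ = ∑ n ∈ S, a n • fourierLp (T := T) 2 n := by
    simp only [P, map_sum, map_smul]
  have hPt (t : AddCircle T) : P t = ∑ n ∈ S, a n * fourier n t := by simp [P]
  apply Complex.ofReal_injective
  calc ((∫ t, ‖∑ n ∈ S, a n * fourier n t‖ ^ 2 ∂haarAddCircle : ℝ) : ℂ)
      = ∫ t, P t * starRingEnd ℂ (P t) ∂haarAddCircle := by
        simp_rw [← integral_complex_ofReal, Complex.mul_conj', hPt, Complex.ofReal_pow]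
    _ = inner ℂ (P.toLp 2 haarAddCircle ℂ) (P.toLp 2 haarAddCircle ℂ) :=
        (ContinuousMap.inner_toLp haarAddCircle P P).symm
    _ = ((∑ n ∈ S, ‖a n‖ ^ 2 : ℝ) : ℂ) := by
        rw [hP, orthonormal_fourier.inner_sum]
        simp [Complex.conj_mul']

variable {Y : Type*} [MeasurableSpace Y] {ν : Measure Y} {S : Finset ℤ} {a : ℤ → Y → ℂ}
  {w : Y → ℝ}

lemma integrable_prod_norm_sq_sum_mul_fourier [SFinite ν]
    (ha : ∀ n ∈ S, AEStronglyMeasurable (a n) ν) (hw : AEStronglyMeasurable w ν)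
    (hint : ∀ n ∈ S, Integrable (fun y => ‖a n y‖ ^ 2 * w y) ν) :
    Integrable (fun z : AddCircle T × Y => ‖∑ n ∈ S, a n z.2 * fourier n z.1‖ ^ 2 * w z.2)
      (haarAddCircle.prod ν) := by
  have hdom : Integrable (fun z : AddCircle T × Y => S.card * ∑ n ∈ S, ‖‖a n z.2‖ ^ 2 * w z.2‖)
      (haarAddCircle.prod ν) :=
    (integrable_finsetSum S fun n hn => (hint n hn).norm.comp_snd haarAddCircle).const_mul _
  refine hdom.mono' ?_ (.of_forall fun z => ?_)
  · refine ((Finset.aestronglyMeasurable_fun_sum S fun n hn => ?_).norm.pow 2).mul hw.comp_snd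
    exact (ha n hn).comp_snd.mul (fourier n).continuous.aestronglyMeasurable.comp_fst
  · have hnorm (n : ℤ) : ‖fourier n z.1‖ = 1 := Circle.norm_coe _
    calc ‖‖∑ n ∈ S, a n z.2 * fourier n z.1‖ ^ 2 * w z.2‖
        = ‖∑ n ∈ S, a n z.2 * fourier n z.1‖ ^ 2 * ‖w z.2‖ := by simp
      _ ≤ (∑ n ∈ S, ‖a n z.2‖) ^ 2 * ‖w z.2‖ := by
          gcongr
          exact norm_sum_le_of_le S fun n _ => by rw [norm_mul, hnorm, mul_one]
      _ ≤ (S.card * ∑ n ∈ S, ‖a n z.2‖ ^ 2) * ‖w z.2‖ := by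
          gcongr
          exact sq_sum_le_card_mul_sum_sq
      _ = S.card * ∑ n ∈ S, ‖‖a n z.2‖ ^ 2 * w z.2‖ := by
          simp [Finset.sum_mul, mul_assoc]

lemma integral_integral_norm_sq_sum_mul_fourier [SFinite ν]
    (ha : ∀ n ∈ S, AEStronglyMeasurable (a n) ν) (hw : AEStronglyMeasurable w ν)
    (hint : ∀ n ∈ S, Integrable (fun y => ‖a n y‖ ^ 2 * w y) ν) :
    ∫ t : AddCircle T, ∫ y, ‖∑ n ∈ S, a n y * fourier n t‖ ^ 2 * w y ∂ν ∂haarAddCircle =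
      ∑ n ∈ S, ∫ y, ‖a n y‖ ^ 2 * w y ∂ν := by
  rw [integral_integral_swap (integrable_prod_norm_sq_sum_mul_fourier ha hw hint),
    ← integral_finsetSum S hint]
  simp_rw [integral_mul_const, integral_norm_sq_sum_mul_fourier, Finset.sum_mul]

lemma setIntegral_Ico_zero_one_eq_integral_haarAddCircle {E : Type*} [NormedAddCommGroup E]
    [NormedSpace ℝ E] (f : UnitAddCircle → E) :
    ∫ x in Set.Ico (0 : ℝ) 1, f x = ∫ t, f t ∂haarAddCircle := by
  rw [integral_haarAddCircle, inv_one, one_smul, ← UnitAddCircle.integral_preimage 0,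
    zero_add, integral_Ico_eq_integral_Ioc]

end TrigonometricPolynomials

section FourierTransform

lemma fourier_comp_sub_div {E : Type*} [NormedAddCommGroup E] [NormedSpace ℂ E] (f : ℝ → E)
    {L : ℝ} (hL : L ≠ 0) (c ξ : ℝ) :
    𝓕 (fun x => f ((x - c) / L)) ξ = 𝐞 (-(c * ξ)) • |L| • 𝓕 f (L * ξ) := by
  let g (t : ℝ) : E := 𝐞 (-(c * ξ)) • 𝐞 (-(t * (L * ξ))) • f t
  have hg (x : ℝ) : 𝐞 (-(x * ξ)) • f ((x - c) / L) = g ((x - c) / L) := by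
    have hphase : -(x * ξ) = -(c * ξ) + -((x - c) / L * (L * ξ)) := by
      field_simp
      ring
    simp only [g]
    rw [hphase, AddChar.map_add_eq_mul, mul_smul]
  calc 𝓕 (fun x => f ((x - c) / L)) ξ
      = ∫ x, g ((x - c) / L) := by simp_rw [Real.fourier_real_eq, hg]
    _ = |L| • ∫ t, g t := by
        rw [integral_sub_right_eq_self fun u => g (u / L), Measure.integral_comp_div]
    _ = 𝐞 (-(c * ξ)) • |L| • 𝓕 f (L * ξ) := by
        simp only [g, Circle.smul_def]
        rw [integral_smul, Real.fourier_real_eq, smul_comm]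
        rfl

lemma tsum_fourierInv_sub_intCast {h : ℝ → ℂ} (hsmooth : ContDiff ℝ ∞ h)
    (hcompact : HasCompactSupport h) (x : ℝ) :
    ∑' m : ℤ, 𝓕⁻ h (x - m) = ∑' n : ℤ, h n * fourier n (x : UnitAddCircle) := by
  have hpoisson := (𝓕⁻ (hcompact.toSchwartzMap hsmooth)).tsum_eq_tsum_fourier x
  rw [FourierTransform.fourier_fourierInv_eq, SchwartzMap.fourierInv_coe] at hpoisson
  rw [← (Equiv.neg ℤ).tsum_eq]
  simp only [Equiv.neg_apply, Int.cast_neg, sub_neg_eq_add]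
  exact hpoisson

end FourierTransform

section DerivPoissonSymbol

/-- The Fourier multiplier `4π|ξ| e^{-2π|ξ|y}` of the operator `D` followed by the Poisson
extension to height `y`. -/
def derivPoissonSymbol (y ξ : ℝ) : ℝ := 4 * π * |ξ| * Real.exp (-(2 * π * |ξ| * y))

/-- The weight of the area integral, which is `(1 - |w|²)|w|` at the point `w = e^{2πi(x+iy)}` of
the unit disk. -/
def areaWeight (y : ℝ) : ℝ := (1 - Real.exp (-(4 * π * y))) * Real.exp (-(2 * π * y))

lemma continuous_derivPoissonSymbol_left (ξ : ℝ) :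
    Continuous fun y => derivPoissonSymbol y ξ := by
  unfold derivPoissonSymbol
  fun_prop

lemma continuous_areaWeight : Continuous areaWeight := by
  unfold areaWeight
  fun_prop

lemma contDiffAt_derivPoissonSymbol {ξ : ℝ} (hξ : ξ ≠ 0) (y : ℝ) {n : ℕ∞} :
    ContDiffAt ℝ n (derivPoissonSymbol y) ξ := by
  have habs : ContDiffAt ℝ n (fun ξ : ℝ => |ξ|) ξ := contDiffAt_abs hξ
  unfold derivPoissonSymbol
  fun_prop

lemma contDiff_derivPoissonSymbol_mul {f : ℝ → ℂ} {n : ℕ∞} (hf : ContDiff ℝ n f)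
    (h0 : f =ᶠ[𝓝 0] 0) (y : ℝ) : ContDiff ℝ n fun ξ => (derivPoissonSymbol y ξ : ℂ) * f ξ := by
  refine contDiff_iff_contDiffAt.2 fun ξ => ?_
  rcases eq_or_ne ξ 0 with rfl | hξ
  · refine (contDiffAt_const (c := (0 : ℂ))).congr_of_eventuallyEq ?_
    filter_upwards [h0] with ξ hξ
    rw [hξ, Pi.zero_apply, mul_zero]
  · exact (Complex.ofRealCLM.contDiff.contDiffAt.comp ξ
      (contDiffAt_derivPoissonSymbol hξ y)).mul hf.contDiffAt

lemma derivPoissonSymbol_sq_mul_areaWeight (y ξ : ℝ) :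
    derivPoissonSymbol y ξ ^ 2 * areaWeight y = (4 * π * ξ) ^ 2 *
      (Real.exp (-(4 * π * |ξ| + 2 * π) * y) - Real.exp (-(4 * π * |ξ| + 6 * π) * y)) := by
  have hlow : Real.exp (-(4 * π * |ξ| + 2 * π) * y) =
      Real.exp (-(2 * π * |ξ| * y)) ^ 2 * Real.exp (-(2 * π * y)) := by
    rw [← Real.exp_nat_mul, ← Real.exp_add]
    ring_nf
  have hhigh : Real.exp (-(4 * π * |ξ| + 6 * π) * y) =
      Real.exp (-(4 * π * |ξ| + 2 * π) * y) * Real.exp (-(4 * π * y)) := by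
    rw [← Real.exp_add]
    ring_nf
  rw [derivPoissonSymbol, areaWeight, hhigh, hlow, mul_pow, mul_pow, sq_abs]
  ring

lemma integrableOn_derivPoissonSymbol_sq_mul_areaWeight (ξ : ℝ) :
    IntegrableOn (fun y => derivPoissonSymbol y ξ ^ 2 * areaWeight y) (Set.Ioi 0) := by
  simp_rw [derivPoissonSymbol_sq_mul_areaWeight]
  exact ((integrableOn_exp_mul_Ioi (neg_lt_zero.2 (by positivity)) 0).sub
    (integrableOn_exp_mul_Ioi (neg_lt_zero.2 (by positivity)) 0)).const_mul _

lemma integral_derivPoissonSymbol_sq_mul_areaWeight (ξ : ℝ) :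
    ∫ y in Set.Ioi 0, derivPoissonSymbol y ξ ^ 2 * areaWeight y =
      (4 * π * ξ) ^ 2 * (1 / (4 * π * |ξ| + 2 * π) - 1 / (4 * π * |ξ| + 6 * π)) := by
  have hlow : 0 < 4 * π * |ξ| + 2 * π := by positivity
  have hhigh : 0 < 4 * π * |ξ| + 6 * π := by positivity
  simp_rw [derivPoissonSymbol_sq_mul_areaWeight]
  rw [integral_const_mul, integral_sub (integrableOn_exp_mul_Ioi (neg_lt_zero.2 hlow) 0)
    (integrableOn_exp_mul_Ioi (neg_lt_zero.2 hhigh) 0),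
    integral_exp_mul_Ioi (neg_lt_zero.2 hlow), integral_exp_mul_Ioi (neg_lt_zero.2 hhigh)]
  simp only [mul_zero, Real.exp_zero, neg_div_neg_eq]

lemma integral_derivPoissonSymbol_sq_mul_areaWeight_le (ξ : ℝ) :
    ∫ y in Set.Ioi 0, derivPoissonSymbol y ξ ^ 2 * areaWeight y ≤ 4 * π := by
  rw [integral_derivPoissonSymbol_sq_mul_areaWeight]
  have hsq : (4 * π * ξ) ^ 2 ≤ (4 * π * |ξ| + 2 * π) * (4 * π * |ξ| + 6 * π) := by
    have hcross : 0 ≤ π ^ 2 * |ξ| := by positivity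
    nlinarith [sq_abs ξ, sq_nonneg π]
  calc (4 * π * ξ) ^ 2 * (1 / (4 * π * |ξ| + 2 * π) - 1 / (4 * π * |ξ| + 6 * π))
      = (4 * π * ξ) ^ 2 / ((4 * π * |ξ| + 2 * π) * (4 * π * |ξ| + 6 * π)) * (4 * π) := by
        field_simp
        ring
    _ ≤ 1 * (4 * π) := by
        gcongr
        exact div_le_one_of_le₀ hsq (by positivity)
    _ = 4 * π := one_mul _

lemma integral_norm_sq_sum_derivPoissonSymbol_le (S : Finset ℤ) (b : ℤ → ℂ) :
    ∫ x in Set.Ico (0 : ℝ) 1, ∫ y in Set.Ioi (0 : ℝ),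
        ‖∑ n ∈ S, (derivPoissonSymbol y n : ℂ) * b n * fourier n (x : UnitAddCircle)‖ ^ 2 *
          areaWeight y ≤
      4 * π * ∑ n ∈ S, ‖b n‖ ^ 2 := by
  have hnorm (n : ℤ) (y : ℝ) : ‖(derivPoissonSymbol y n : ℂ) * b n‖ ^ 2 * areaWeight y =
      ‖b n‖ ^ 2 * (derivPoissonSymbol y n ^ 2 * areaWeight y) := by
    rw [norm_mul, mul_pow, Complex.norm_real, Real.norm_eq_abs, sq_abs]
    ring
  have hmeas (n : ℤ) : Continuous fun y => (derivPoissonSymbol y n : ℂ) * b n :=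
    (Complex.continuous_ofReal.comp (continuous_derivPoissonSymbol_left n)).mul_const _
  rw [setIntegral_Ico_zero_one_eq_integral_haarAddCircle fun t => ∫ y in Set.Ioi (0 : ℝ),
    ‖∑ n ∈ S, (derivPoissonSymbol y n : ℂ) * b n * fourier n t‖ ^ 2 * areaWeight y,
    integral_integral_norm_sq_sum_mul_fourier (fun n _ => (hmeas n).aestronglyMeasurable)
      continuous_areaWeight.aestronglyMeasurable fun n _ => ?_, Finset.mul_sum]
  · refine Finset.sum_le_sum fun n _ => ?_
    simp_rw [hnorm, integral_const_mul]
    rw [mul_comm]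
    gcongr
    exact integral_derivPoissonSymbol_sq_mul_areaWeight_le n
  · simp_rw [hnorm]
    exact (integrableOn_derivPoissonSymbol_sq_mul_areaWeight n).const_mul _

end DerivPoissonSymbol

section Frequencies

/-- The nonzero integers `n` with `|n| ≤ R`. -/
def nonzeroFrequencies (R : ℝ) : Finset ℤ := (Finset.Icc (-⌊R⌋) ⌊R⌋).erase 0

lemma mem_nonzeroFrequencies {R : ℝ} {n : ℤ} :
    n ∈ nonzeroFrequencies R ↔ n ≠ 0 ∧ |(n : ℝ)| ≤ R := by
  rw [nonzeroFrequencies, Finset.mem_erase, Finset.mem_Icc, ← abs_le, Int.le_floor, Int.cast_abs]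

lemma card_nonzeroFrequencies_le {R : ℝ} (hR : 0 ≤ R) :
    ((nonzeroFrequencies R).card : ℝ) ≤ 2 * R := by
  have hfloor : 0 ≤ ⌊R⌋ := Int.floor_nonneg.2 hR
  have hcard : ((nonzeroFrequencies R).card : ℤ) = 2 * ⌊R⌋ := by
    rw [nonzeroFrequencies, Finset.card_erase_of_mem (by simp [hfloor]), Int.card_Icc]
    omega
  calc ((nonzeroFrequencies R).card : ℝ) = 2 * ⌊R⌋ := by exact_mod_cast hcard
    _ ≤ 2 * R := by
        gcongr
        exact Int.floor_le R

end Frequencies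

section Wavelets

variable (ψ : SchwartzMap ℝ ℂ) (j k : ℤ)

/-- The function `|I|^{1/2} ψ̂_I`, for `I = [2^{-j}k, 2^{-j}(k+1))`: the Fourier transform of `f_I`
without the factor `4π|ξ|`. -/
def scaledFourierPsiI (ξ : ℝ) : ℂ := Real.sqrt (len j) * 𝓕 (psiI ψ j k) ξ

lemma len_pos : 0 < len j := zpow_pos two_pos _

lemma scaledFourierPsiI_eq (ξ : ℝ) :
    scaledFourierPsiI ψ j k ξ = len j * (𝐞 (-(ctr j k * ξ)) * 𝓕 ⇑ψ (len j * ξ)) := by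
  have hL := len_pos j
  have hpsiI : psiI ψ j k =
      fun x => ((Real.sqrt (len j) : ℂ)⁻¹ • ψ) ((x - ctr j k) / len j) := by
    ext x
    simp [psiI]
  have hsqrt : (Real.sqrt (len j) : ℂ) ≠ 0 := by
    exact_mod_cast (Real.sqrt_pos.2 hL).ne'
  rw [scaledFourierPsiI, hpsiI, fourier_comp_sub_div _ hL.ne', abs_of_pos hL,
    ← SchwartzMap.fourier_coe, FourierTransform.fourier_smul, smul_apply,
    SchwartzMap.fourier_coe, Circle.smul_def, Complex.real_smul, smul_eq_mul, smul_eq_mul]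
  field_simp

lemma norm_scaledFourierPsiI (ξ : ℝ) :
    ‖scaledFourierPsiI ψ j k ξ‖ = len j * ‖𝓕 ⇑ψ (len j * ξ)‖ := by
  rw [scaledFourierPsiI_eq, norm_mul, norm_mul, Circle.norm_coe, one_mul, Complex.norm_real,
    Real.norm_of_nonneg (len_pos j).le]

lemma contDiff_scaledFourierPsiI : ContDiff ℝ ∞ (scaledFourierPsiI ψ j k) := by
  have hchar : ContDiff ℝ ∞ fun ξ : ℝ => (𝐞 (-(ctr j k * ξ)) : ℂ) := by
    simp_rw [Real.fourierChar_apply]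
    exact ((Complex.ofRealCLM.contDiff.comp
      (contDiff_const.mul (contDiff_const.mul contDiff_id).neg)).mul contDiff_const).cexp
  rw [funext (scaledFourierPsiI_eq ψ j k), ← SchwartzMap.fourier_coe]
  exact contDiff_const.mul (hchar.mul (((𝓕 ψ).smooth ⊤).comp (by fun_prop)))

lemma FI_eq_fourierInv (x y : ℝ) :
    FI ψ j k x y =
      𝓕⁻ (fun ξ => (derivPoissonSymbol y ξ : ℂ) * scaledFourierPsiI ψ j k ξ) x := by
  rw [FI, Real.fourierInv_eq']
  congr 1 with ξ
  simp only [derivPoissonSymbol, scaledFourierPsiI, smul_eq_mul, RCLike.inner_apply,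
    conj_trivial]
  push_cast
  ring_nf

variable {ψ}

lemma scaledFourierPsiI_eq_zero {ξ : ℝ} (h : 𝓕 ⇑ψ (len j * ξ) = 0) :
    scaledFourierPsiI ψ j k ξ = 0 := by
  rw [scaledFourierPsiI_eq, h, mul_zero, mul_zero]

lemma hasCompactSupport_scaledFourierPsiI (hψ : HasCompactSupport (𝓕 ⇑ψ)) :
    HasCompactSupport (scaledFourierPsiI ψ j k) :=
  (hψ.comp_smul (len_pos j).ne').mono fun _ => mt (scaledFourierPsiI_eq_zero j k)

lemma scaledFourierPsiI_eventuallyEq_zero (hψ : 𝓕 ⇑ψ =ᶠ[𝓝 0] 0) :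
    scaledFourierPsiI ψ j k =ᶠ[𝓝 0] 0 := by
  have hscale : Tendsto (fun ξ => len j * ξ) (𝓝 0) (𝓝 0) := by
    simpa using (continuous_const_mul (len j)).tendsto 0
  filter_upwards [hscale.eventually hψ] with ξ hξ
  exact scaledFourierPsiI_eq_zero j k hξ

lemma GI_eq_tsum_fourier (hcompact : HasCompactSupport (𝓕 ⇑ψ)) (h0 : 𝓕 ⇑ψ =ᶠ[𝓝 0] 0)
    (x y : ℝ) :
    GI ψ j k x y = ∑' n : ℤ, (derivPoissonSymbol y n : ℂ) * scaledFourierPsiI ψ j k n *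
      fourier n (x : UnitAddCircle) := by
  simp_rw [GI, FI_eq_fourierInv]
  exact tsum_fourierInv_sub_intCast
    (contDiff_derivPoissonSymbol_mul (contDiff_scaledFourierPsiI ψ j k)
      (scaledFourierPsiI_eventuallyEq_zero j k h0) y)
    (hasCompactSupport_scaledFourierPsiI j k hcompact).mul_left x

lemma sum_norm_sq_scaledFourierPsiI_le {M R : ℝ} (hR : 0 ≤ R) (hM : ∀ ξ, ‖𝓕 ⇑ψ ξ‖ ≤ M) :
    ∑ n ∈ nonzeroFrequencies (R / len j), ‖scaledFourierPsiI ψ j k n‖ ^ 2 ≤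
      2 * R * M ^ 2 * len j := by
  have hL := len_pos j
  calc ∑ n ∈ nonzeroFrequencies (R / len j), ‖scaledFourierPsiI ψ j k n‖ ^ 2
      ≤ ∑ _n ∈ nonzeroFrequencies (R / len j), (len j * M) ^ 2 := by
        gcongr with n
        rw [norm_scaledFourierPsiI]
        gcongr
        exact hM _
    _ = (nonzeroFrequencies (R / len j)).card * (len j * M) ^ 2 := by simp
    _ ≤ 2 * (R / len j) * (len j * M) ^ 2 := by
        gcongr
        exact card_nonzeroFrequencies_le (by positivity)
    _ = 2 * R * M ^ 2 * len j := by field_simp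

lemma GI_eq_sum_nonzeroFrequencies {R : ℝ} (hR : ∀ ξ, R ≤ |ξ| → 𝓕 ⇑ψ ξ = 0)
    (h0 : 𝓕 ⇑ψ =ᶠ[𝓝 0] 0) (x y : ℝ) :
    GI ψ j k x y = ∑ n ∈ nonzeroFrequencies (R / len j),
      (derivPoissonSymbol y n : ℂ) * scaledFourierPsiI ψ j k n *
        fourier n (x : UnitAddCircle) := by
  have hcompact : HasCompactSupport (𝓕 ⇑ψ) := by
    refine .intro (isCompact_Icc (a := -R) (b := R)) fun ξ hξ => hR ξ ?_
    rw [Set.mem_Icc, ← abs_le, not_le] at hξ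
    exact hξ.le
  rw [GI_eq_tsum_fourier j k hcompact h0, tsum_eq_sum fun n hn => ?_]
  rcases eq_or_ne n 0 with rfl | hn0
  · simp [derivPoissonSymbol]
  · have hlarge : R / len j < |(n : ℝ)| := by
      by_contra! hle
      exact hn (mem_nonzeroFrequencies.2 ⟨hn0, hle⟩)
    rw [div_lt_iff₀' (len_pos j)] at hlarge
    rw [scaledFourierPsiI_eq_zero, mul_zero, zero_mul]
    exact hR _ (by rw [abs_mul, abs_of_pos (len_pos j)]; exact hlarge.le)

end Wavelets

theorem stmt_5_general (ψ : SchwartzMap ℝ ℂ) (hcompact : HasCompactSupport (𝓕 ⇑ψ))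
    (hzero : (0 : ℝ) ∉ tsupport (𝓕 ⇑ψ)) :
    ∃ C : ℝ, 0 < C ∧ ∀ j k : ℤ,
      (∫ x in Set.Ico (0 : ℝ) 1, ∫ y in Set.Ioi (0 : ℝ),
          ‖GI ψ j k x y‖ ^ 2 * (1 - Real.exp (-(4 * π * y))) * Real.exp (-(2 * π * y)))
        ≤ C * len j := by
  have h0 : 𝓕 ⇑ψ =ᶠ[𝓝 0] 0 := notMem_tsupport_iff_eventuallyEq.1 hzero
  have hcont : Continuous (𝓕 ⇑ψ) := SchwartzMap.fourier_coe ψ ▸ (𝓕 ψ).continuous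
  obtain ⟨R, hRpos, hR⟩ := hcompact.exists_pos_le_norm
  obtain ⟨M, hM⟩ := hcompact.exists_bound_of_continuous hcont
  refine ⟨4 * π * (2 * R * M ^ 2) + 1, by positivity, fun j k => ?_⟩
  have hL := len_pos j
  calc
    _ = ∫ x in Set.Ico (0 : ℝ) 1, ∫ y in Set.Ioi (0 : ℝ), ‖GI ψ j k x y‖ ^ 2 * areaWeight y := by
        simp only [areaWeight, mul_assoc]
    _ ≤ 4 * π * ∑ n ∈ nonzeroFrequencies (R / len j), ‖scaledFourierPsiI ψ j k n‖ ^ 2 := by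
        simp_rw [GI_eq_sum_nonzeroFrequencies j k hR h0]
        exact integral_norm_sq_sum_derivPoissonSymbol_le _ _
    _ ≤ 4 * π * (2 * R * M ^ 2 * len j) := by
        gcongr
        exact sum_norm_sq_scaledFourierPsiI_le j k hRpos.le hM
    _ ≤ (4 * π * (2 * R * M ^ 2) + 1) * len j := by linarith

/-- There is a constant `C > 0`, depending only on `ψ`, such that for every dyadic interval
`I = [2^{-j}k, 2^{-j}(k+1)) ⊆ [0,1)`,
`∫_{x=0}^{1} ∫_{y=0}^{∞} |G_I(x+iy)|² (1-e^{-4πy}) e^{-2πy} dy dx ≤ C |I|`. -/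
theorem stmt_5 (ψ : SchwartzMap ℝ ℂ)
    (hsupp : Function.support (𝓕 ⇑ψ) ⊆
      Set.Icc (-(4 / 3) : ℝ) (-(1 / 3)) ∪ Set.Icc (1 / 3) (4 / 3))
    (horth : ∀ j k j' k' : ℤ,
      (∫ x : ℝ, psiI ψ j k x * (starRingEnd ℂ) (psiI ψ j' k' x)) =
        if j = j' ∧ k = k' then 1 else 0) :
    ∃ C : ℝ, 0 < C ∧ ∀ j k : ℕ, k < 2 ^ j →
      (∫ x in Set.Ico (0 : ℝ) 1, ∫ y in Set.Ioi (0 : ℝ),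
          ‖GI ψ (j : ℤ) (k : ℤ) x y‖ ^ 2 * (1 - Real.exp (-(4 * π * y))) *
            Real.exp (-(2 * π * y)))
        ≤ C * len (j : ℤ) := by
  have hclosed : IsClosed (Set.Icc (-(4 / 3) : ℝ) (-(1 / 3)) ∪ Set.Icc (1 / 3) (4 / 3)) :=
    isClosed_Icc.union isClosed_Icc
  have hzero : (0 : ℝ) ∉ tsupport (𝓕 ⇑ψ) := fun h => by
    rcases closure_minimal hsupp hclosed h with h | h <;> norm_num at h
  obtain ⟨C, hC, hbound⟩ := stmt_5_general ψ
    (.of_support_subset_isCompact (isCompact_Icc.union isCompact_Icc) hsupp) hzero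
  exact ⟨C, hC, fun j k _ => hbound j k⟩
end
end

section
/- Let f, g : ℝ → ℂ be Schwartz functions, and for y > 0 define the Poisson extensions of Df and Dg by F(x+iy) = ∫_ℝ 4π|ξ| f̂(ξ) e^{-2π|ξ|y} e^{2πixξ} dξ and G(x+iy) = ∫_ℝ 4π|ξ| ĝ(ξ) e^{-2π|ξ|y} e^{2πixξ} dξ. Then ∫_{ℂ_+} F(x+iy) \overline{G(x+iy)} y dx dy = ∫_ℝ f(x) \overline{g(x)} dx, where ℂ_+ = {x+iy : x ∈ ℝ, y > 0}. (This is the Littlewood–Paley identity obtained by Green's formula for the operator D with Fourier symbol 4π|ξ|.) -/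
open MeasureTheory Complex Real
open scoped FourierTransform

noncomputable section

/-- The Poisson extension to the upper half-plane of `Df`, where `D` is the Fourier multiplier
operator with symbol `4π|ξ|`: `F(x+iy) = ∫ 4π|ξ| f̂(ξ) e^{-2π|ξ|y} e^{2πixξ} dξ`. -/
def poissonExtD (f : SchwartzMap ℝ ℂ) (x y : ℝ) : ℂ :=
  ∫ ξ : ℝ, ((4 * π * |ξ| * Real.exp (-(2 * π * |ξ| * y)) : ℝ) : ℂ) * 𝓕 ⇑f ξ *
    Complex.exp (2 * (π : ℂ) * Complex.I * (x : ℂ) * (ξ : ℂ))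

/-!
On the Fourier side `F(· + iy)` and `G(· + iy)` have densities `4π|ξ| e^{-2π|ξ|y}` times `f̂` and
`ĝ`, so Plancherel in `x` followed by Fubini reduces the identity to `∫ f̂ conj ĝ = ∫ f conj g` and
`∫₀^∞ y (4π|ξ| e^{-2π|ξ|y})² dy = 1` for `ξ ≠ 0`. This works for `L²` functions on any nonzero
Euclidean space with values in a Hilbert space.
-/

section Kernel

variable {α β E : Type*} [MeasurableSpace α] [MeasurableSpace β] [NormedAddCommGroup E]
  [NormedSpace ℝ E] {μ : Measure α} {ν : Measure β} [SFinite μ] [SFinite ν] {k : α → β → ℝ}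
  {w : β → E}

lemma integrable_prod_smul_of_integral_eq_one
    (hk : AEStronglyMeasurable (Function.uncurry k) (μ.prod ν))
    (hk_nonneg : ∀ᵐ b ∂ν, ∀ᵐ a ∂μ, 0 ≤ k a b) (hk_one : ∀ᵐ b ∂ν, ∫ a, k a b ∂μ = 1)
    (hw : Integrable w ν) :
    Integrable (Function.uncurry fun a b ↦ k a b • w b) (μ.prod ν) := by
  refine (integrable_prod_iff' (hk.smul hw.aestronglyMeasurable.comp_snd)).2 ⟨?_, ?_⟩
  · filter_upwards [hk_one] with b hb
    exact (Integrable.of_integral_ne_zero (hb.trans_ne one_ne_zero)).smul_const (w b)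
  · refine hw.norm.congr ?_
    filter_upwards [hk_nonneg, hk_one] with b hb_nonneg hb_one
    calc ‖w b‖ = ∫ a, k a b * ‖w b‖ ∂μ := by rw [integral_mul_const, hb_one, one_mul]
      _ = ∫ a, ‖k a b • w b‖ ∂μ := integral_congr_ae <| by
        filter_upwards [hb_nonneg] with a ha
        rw [norm_smul, Real.norm_of_nonneg ha]

lemma integral_integral_smul_of_integral_eq_one [CompleteSpace E]
    (hk : AEStronglyMeasurable (Function.uncurry k) (μ.prod ν))
    (hk_nonneg : ∀ᵐ b ∂ν, ∀ᵐ a ∂μ, 0 ≤ k a b) (hk_one : ∀ᵐ b ∂ν, ∫ a, k a b ∂μ = 1)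
    (hw : Integrable w ν) :
    ∫ a, ∫ b, k a b • w b ∂ν ∂μ = ∫ b, w b ∂ν := by
  rw [integral_integral_swap (integrable_prod_smul_of_integral_eq_one hk hk_nonneg hk_one hw)]
  refine integral_congr_ae ?_
  filter_upwards [hk_one] with b hb
  rw [integral_smul_const, hb, one_smul]

end Kernel

section Plancherel

variable {V H : Type*} [NormedAddCommGroup V] [InnerProductSpace ℝ V] [FiniteDimensional ℝ V]
  [MeasurableSpace V] [BorelSpace V] [NormedAddCommGroup H]

lemma continuous_fourierInv [NormedSpace ℂ H] {h : V → H} (hh : Integrable h) :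
    Continuous (𝓕⁻ h) := by
  rw [← Real.Lp.fourierTransformInv_toLp (memLp_one_iff_integrable.2 hh)]
  exact BoundedContinuousFunction.continuous _

lemma integral_fourierInv_smul_eq [NormedSpace ℂ H] [CompleteSpace H] {φ : V → ℂ} {h : V → H}
    (hφ : Integrable φ) (hh : Integrable h) :
    ∫ x, 𝓕⁻ φ x • h x = ∫ x, φ x • 𝓕⁻ h x := by
  have hcont : Continuous fun p : V × V ↦ (-innerₗ V) p.1 p.2 := by
    simp only [LinearMap.neg_apply, innerₗ_apply_apply]
    fun_prop
  have hflip : (-innerₗ V).flip = -innerₗ V := by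
    ext x y
    simp [real_inner_comm]
  have hswap := VectorFourier.integral_fourierIntegral_smul_eq_flip (μ := volume) (ν := volume)
    Real.continuous_fourierChar hcont hφ hh
  rwa [hflip] at hswap

variable [InnerProductSpace ℂ H] [CompleteSpace H]

lemma coeFn_fourierInv_toLp {h : V → H} (h1 : Integrable h) (h2 : MemLp h 2) :
    (𝓕⁻ (h2.toLp h) : Lp H 2 (volume : Measure V)) =ᵐ[volume] 𝓕⁻ h := by
  refine ae_eq_of_integral_contDiff_smul_eq ((Lp.memLp _).locallyIntegrable (by norm_num))
    (continuous_fourierInv h1).locallyIntegrable fun g g_smooth g_cpt ↦ ?_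
  have hg_cpt : HasCompactSupport (Complex.ofRealCLM ∘ g) := g_cpt.comp_left rfl
  set φ : SchwartzMap V ℂ := hg_cpt.toSchwartzMap (by fun_prop)
  have hφ (x : V) (v : H) : φ x • v = g x • v := Complex.coe_smul (g x) v
  calc
    _ = Lp.toTemperedDistribution (𝓕⁻ (h2.toLp h) : Lp H 2 (volume : Measure V)) φ := by
      simp only [Lp.toTemperedDistribution_apply, hφ]
    _ = ∫ x, 𝓕⁻ φ x • h x := by
      rw [← Lp.fourierInv_toTemperedDistribution_eq, TemperedDistribution.fourierInv_apply,
        Lp.toTemperedDistribution_apply]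
      refine integral_congr_ae ?_
      filter_upwards [h2.coeFn_toLp] with x hx
      rw [hx]
    _ = ∫ x, φ x • 𝓕⁻ h x := by
      rw [SchwartzMap.fourierInv_coe]
      exact integral_fourierInv_smul_eq φ.integrable h1
    _ = ∫ x, g x • 𝓕⁻ h x := by simp only [hφ]

lemma integral_inner_fourierInv_fourierInv {h k : V → H} (h1 : Integrable h) (h2 : MemLp h 2)
    (k1 : Integrable k) (k2 : MemLp k 2) :
    ∫ x, inner ℂ (𝓕⁻ h x) (𝓕⁻ k x) = ∫ x, inner ℂ (h x) (k x) := by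
  let hL : Lp H 2 (volume : Measure V) := h2.toLp h
  let kL : Lp H 2 (volume : Measure V) := k2.toLp k
  calc ∫ x, inner ℂ (𝓕⁻ h x) (𝓕⁻ k x) = inner ℂ (𝓕⁻ hL) (𝓕⁻ kL) := by
        refine integral_congr_ae ?_
        filter_upwards [coeFn_fourierInv_toLp h1 h2, coeFn_fourierInv_toLp k1 k2] with x hx kx
        rw [hx, kx]
    _ = inner ℂ hL kL := by
        rw [← Lp.inner_fourier_eq, FourierTransform.fourier_fourierInv_eq,
          FourierTransform.fourier_fourierInv_eq]
    _ = ∫ x, inner ℂ (h x) (k x) := by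
        refine integral_congr_ae ?_
        filter_upwards [h2.coeFn_toLp, k2.coeFn_toLp] with x hx kx
        rw [hx, kx]

end Plancherel

section Symbol

/-- The radial Fourier symbol `4πr e^{-2πry}`, with `r = |ξ|`, of `D` followed by the Poisson
extension to height `y`. -/
def poissonDSymbol (y r : ℝ) : ℝ := 4 * π * r * Real.exp (-(2 * π * r * y))

lemma continuous_uncurry_poissonDSymbol : Continuous (Function.uncurry poissonDSymbol) := by
  unfold poissonDSymbol Function.uncurry
  fun_prop

lemma continuous_poissonDSymbol (y : ℝ) : Continuous (poissonDSymbol y) :=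
  continuous_uncurry_poissonDSymbol.comp (.prodMk_right y)

lemma poissonDSymbol_sq (y r : ℝ) :
    poissonDSymbol y r ^ 2 = (4 * π * r) ^ 2 * Real.exp (-(4 * π * r * y)) := by
  rw [poissonDSymbol, mul_pow, ← Real.exp_nat_mul]
  congr 2
  push_cast
  ring

lemma abs_poissonDSymbol_le {y r : ℝ} (hy : 0 < y) (hr : 0 ≤ r) :
    |poissonDSymbol y r| ≤ 2 / y := by
  have hexp : 2 * π * r * y ≤ Real.exp (2 * π * r * y) := by
    linarith [Real.add_one_le_exp (2 * π * r * y)]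
  rw [poissonDSymbol, abs_of_nonneg (by positivity), Real.exp_neg, ← div_eq_mul_inv,
    div_le_div_iff₀ (Real.exp_pos _) hy]
  linarith

lemma integral_Ioi_mul_poissonDSymbol_sq {r : ℝ} (hr : 0 < r) :
    ∫ y in Set.Ioi (0 : ℝ), y * poissonDSymbol y r ^ 2 = 1 := by
  have hs : 0 < 4 * π * r := by positivity
  have hGamma := Real.integral_rpow_mul_exp_neg_mul_Ioi two_pos hs
  norm_num only [Real.rpow_one, Real.Gamma_two, Real.rpow_two] at hGamma
  simp only [poissonDSymbol_sq, mul_left_comm _ ((4 * π * r) ^ 2)]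
  rw [integral_const_mul, hGamma]
  field_simp

variable {V : Type*} [NormedAddCommGroup V] [InnerProductSpace ℝ V] [FiniteDimensional ℝ V]
  [MeasurableSpace V] [BorelSpace V] {y : ℝ}

lemma memLp_top_poissonDSymbol_norm (hy : 0 < y) :
    MemLp (fun ξ : V ↦ poissonDSymbol y ‖ξ‖) ⊤ :=
  memLp_top_of_bound ((continuous_poissonDSymbol y).comp continuous_norm).aestronglyMeasurable
    (2 / y) (.of_forall fun ξ ↦ abs_poissonDSymbol_le hy (norm_nonneg ξ))

variable [Nontrivial V]

lemma memLp_two_poissonDSymbol_norm (hy : 0 < y) :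
    MemLp (fun ξ : V ↦ poissonDSymbol y ‖ξ‖) 2 := by
  refine (memLp_two_iff_integrable_sq
    ((continuous_poissonDSymbol y).comp continuous_norm).aestronglyMeasurable).2 ?_
  refine (integrable_fun_norm_addHaar volume (f := fun r ↦ poissonDSymbol y r ^ 2)).2 ?_
  have hint := integrableOn_rpow_mul_exp_neg_mul_rpow (p := 1) (b := 4 * π * y)
    (s := (Module.finrank ℝ V - 1 + 2 : ℕ)) (neg_one_lt_zero.trans_le (Nat.cast_nonneg _))
    one_pos (by positivity)
  refine IntegrableOn.congr_fun (hint.const_mul ((4 * π) ^ 2)) (fun r _ ↦ ?_) measurableSet_Ioi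
  simp only [poissonDSymbol_sq, Real.rpow_natCast, Real.rpow_one, smul_eq_mul]
  ring_nf

lemma integral_integral_poissonDSymbol_sq_smul {E : Type*} [NormedAddCommGroup E]
    [NormedSpace ℝ E] [CompleteSpace E] {w : V → E} (hw : Integrable w) :
    ∫ y in Set.Ioi (0 : ℝ), ∫ ξ : V, (y * poissonDSymbol y ‖ξ‖ ^ 2) • w ξ = ∫ ξ, w ξ := by
  refine integral_integral_smul_of_integral_eq_one ?_ (.of_forall fun ξ ↦ ?_) ?_ hw
  · have hsymbol := continuous_uncurry_poissonDSymbol.comp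
      (continuous_fst.prodMk (continuous_norm.comp (continuous_snd (X := ℝ) (Y := V))))
    exact (continuous_fst.mul (hsymbol.pow 2)).aestronglyMeasurable
  · filter_upwards [ae_restrict_mem measurableSet_Ioi] with y hy
    exact mul_nonneg hy.le (sq_nonneg _)
  · filter_upwards [Measure.ae_ne volume (0 : V)] with ξ hξ
    exact integral_Ioi_mul_poissonDSymbol_sq (norm_pos_iff.2 hξ)

end Symbol

section LittlewoodPaley

variable {V H : Type*} [NormedAddCommGroup V] [InnerProductSpace ℝ V] [FiniteDimensional ℝ V]
  [MeasurableSpace V] [BorelSpace V] [NormedAddCommGroup H] [InnerProductSpace ℂ H]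
  [CompleteSpace H]

/-- The value at `(x, y)` of the Poisson extension of `Df` for `f` in `L²`, where `D` is the Fourier
multiplier operator with symbol `4π‖ξ‖` on a Euclidean space. It is a pointwise integral over the
frequencies, absolutely convergent for `y > 0`. -/
def poissonExtDL2 (f : Lp H 2 (volume : Measure V)) (x : V) (y : ℝ) : H :=
  𝓕⁻ (fun ξ ↦ poissonDSymbol y ‖ξ‖ • 𝓕 f ξ) x

lemma integral_inner_poissonExtDL2 [Nontrivial V] (f g : Lp H 2 (volume : Measure V)) {y : ℝ}
    (hy : 0 < y) :
    ∫ x, inner ℂ (poissonExtDL2 f x y) (poissonExtDL2 g x y) =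
      ∫ ξ, poissonDSymbol y ‖ξ‖ ^ 2 • inner ℂ (𝓕 f ξ) (𝓕 g ξ) := by
  have integrable_density (u : Lp H 2 (volume : Measure V)) :
      Integrable fun ξ ↦ poissonDSymbol y ‖ξ‖ • u ξ :=
    memLp_one_iff_integrable.1 ((Lp.memLp u).smul (𝕜 := ℝ) (memLp_two_poissonDSymbol_norm hy))
  have memLp_density (u : Lp H 2 (volume : Measure V)) :
      MemLp (fun ξ ↦ poissonDSymbol y ‖ξ‖ • u ξ) 2 :=
    (Lp.memLp u).smul (𝕜 := ℝ) (memLp_top_poissonDSymbol_norm hy)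
  simp only [poissonExtDL2]
  rw [integral_inner_fourierInv_fourierInv (integrable_density _) (memLp_density _)
    (integrable_density _) (memLp_density _)]
  simp only [inner_smul_left_eq_smul, inner_smul_right_eq_smul, smul_smul, sq]

theorem stmt_9_general [Nontrivial V] (f g : Lp H 2 (volume : Measure V)) :
    ∫ y in Set.Ioi (0 : ℝ), ∫ x, y • inner ℂ (poissonExtDL2 f x y) (poissonExtDL2 g x y) =
      inner ℂ f g :=
  calc
    _ = ∫ y in Set.Ioi (0 : ℝ), ∫ ξ, (y * poissonDSymbol y ‖ξ‖ ^ 2) • inner ℂ (𝓕 f ξ) (𝓕 g ξ) :=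
      setIntegral_congr_fun measurableSet_Ioi fun y hy ↦ by
        simp only [integral_smul, mul_smul, integral_inner_poissonExtDL2 f g hy]
    _ = inner ℂ (𝓕 f) (𝓕 g) :=
      integral_integral_poissonDSymbol_sq_smul (L2.integrable_inner (𝕜 := ℂ) (𝓕 f) (𝓕 g))
    _ = inner ℂ f g := Lp.inner_fourier_eq f g

end LittlewoodPaley

lemma poissonExtDL2_toLp (f : SchwartzMap ℝ ℂ) (x y : ℝ) :
    poissonExtDL2 (f.toLp 2) x y = poissonExtD f x y := by
  have hphase (ξ : ℝ) : ((2 * π * inner ℝ ξ x : ℝ) : ℂ) * I = 2 * π * I * x * ξ := by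
    rw [RCLike.inner_apply, conj_trivial]
    push_cast
    ring
  rw [poissonExtDL2, poissonExtD, Real.fourierInv_eq', SchwartzMap.toLp_fourier_eq,
    ← SchwartzMap.fourier_coe]
  refine integral_congr_ae ?_
  filter_upwards [(𝓕 f).coeFn_toLp 2] with ξ hξ
  rw [hphase, hξ, Real.norm_eq_abs, ← poissonDSymbol, Complex.real_smul, smul_eq_mul, mul_comm]

/-- The Littlewood–Paley identity: for Schwartz `f, g`,
`∫_{ℂ_+} F(x+iy) \overline{G(x+iy)} y dx dy = ∫_ℝ f \bar{g}`, where `F, G` are the Poisson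
extensions of `Df, Dg`. -/
theorem stmt_9 (f g : SchwartzMap ℝ ℂ) :
    (∫ y in Set.Ioi (0 : ℝ), ∫ x : ℝ,
        poissonExtD f x y * (starRingEnd ℂ) (poissonExtD g x y) * ((y : ℝ) : ℂ))
      = ∫ x : ℝ, f x * (starRingEnd ℂ) (g x) := by
  have h := stmt_9_general (g.toLp 2) (f.toLp 2)
  simpa [poissonExtDL2_toLp, mul_comm] using h
end
end

section
/- Let φ : ℝ → ℂ be a Schwartz function such that d = dist(supp(φ̂), 0) > 0, and let p be a polynomial of degree n. Then there exists a constant C > 0 (depending on φ and p) such that |p(x) (φ * P_y)(x)| ≤ C (1 + yⁿ) e^{-2πdy} / y^{1/2} for all x ∈ ℝ and y > 0, where P_y(t) = (1/π) y/(t² + y²) is the Poisson kernel of the upper half-plane and (φ * P_y)(x) = ∫_ℝ φ(t) P_y(x-t) dt. -/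
open MeasureTheory Complex Real
open scoped FourierTransform

noncomputable section

/-- The Poisson kernel of the upper half-plane, `P_y(t) = (1/π) y/(t²+y²)`. -/
def poissonKer (y t : ℝ) : ℝ := (1 / π) * y / (t ^ 2 + y ^ 2)

/-!
On the Fourier side the Poisson extension is `∫ 𝓕 φ(ξ) e^{-2πy|ξ| + 2πixξ} dξ`, and splitting at
`ξ = 0` gives the Laplace integrals `L g(w) = ∫₀^∞ g(ξ) e^{wξ} dξ` of `𝓕 φ` at `w = 2πi(x + iy)` and
of its reflection at the conjugate of `w`. If `g` vanishes on `(-d, d)` then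
`|L g(w)| ≤ ‖g‖₁ e^{d Re w}`, and integration by parts, without boundary term, gives
`w L g(w) = -L g'(w)`. Since `g'` again vanishes on `(-d, d)`, every power of `1 + |w|` is absorbed
into the constant; as `|w|` dominates both `|x|` and `y`, this covers the growth of `p` and still
leaves any prescribed power of `1 + y` to spare.
-/

open Set
open scoped ComplexConjugate Polynomial SchwartzMap

variable {E : Type*} [NormedAddCommGroup E] [NormedSpace ℂ E]

section LaplaceIntegral

/-- The Laplace transform of the restriction of `f` to `(0, ∞)`, with the sign convention that makes
it converge on the left half-plane `w.re ≤ 0` when `f` is integrable. -/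
def laplaceIntegral (f : ℝ → E) (w : ℂ) : E :=
  ∫ ξ in Ioi (0 : ℝ), Complex.exp (w * ξ) • f ξ

variable {f f' : ℝ → E} {w : ℂ} {d : ℝ}

lemma norm_cexp_mul_ofReal (w : ℂ) (ξ : ℝ) : ‖Complex.exp (w * ξ)‖ = Real.exp (w.re * ξ) := by
  rw [Complex.norm_exp, Complex.re_mul_ofReal]

lemma integrableOn_cexp_smul_Ioi (hf : IntegrableOn f (Ioi 0)) (hw : w.re ≤ 0) :
    IntegrableOn (fun ξ : ℝ ↦ Complex.exp (w * ξ) • f ξ) (Ioi 0) := by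
  refine Integrable.bdd_smul hf 1 (by fun_prop) (ae_restrict_of_forall_mem measurableSet_Ioi ?_)
  intro ξ hξ
  rw [norm_cexp_mul_ofReal, Real.exp_le_one_iff]
  exact mul_nonpos_of_nonpos_of_nonneg hw (le_of_lt hξ)

lemma norm_laplaceIntegral_le (hf : IntegrableOn f (Ioi 0)) (hfd : EqOn f 0 (Ioo 0 d))
    (hw : w.re ≤ 0) :
    ‖laplaceIntegral f w‖ ≤ (∫ ξ in Ioi (0 : ℝ), ‖f ξ‖) * Real.exp (w.re * d) := by
  rw [← integral_mul_const]
  refine norm_integral_le_of_norm_le (hf.norm.mul_const _)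
    (ae_restrict_of_forall_mem measurableSet_Ioi fun ξ hξ ↦ ?_)
  rw [norm_smul, norm_cexp_mul_ofReal, mul_comm]
  rcases lt_or_ge ξ d with hξd | hdξ
  · simp [hfd ⟨hξ, hξd⟩]
  · exact mul_le_mul_of_nonneg_left
      (Real.exp_le_exp.2 (mul_le_mul_of_nonpos_left hdξ hw)) (norm_nonneg _)

lemma hasDerivAt_cexp_smul {ξ : ℝ} {v : E} (hf : HasDerivAt f v ξ) :
    HasDerivAt (fun ξ : ℝ ↦ Complex.exp (w * ξ) • f ξ)
      (Complex.exp (w * ξ) • v + w • Complex.exp (w * ξ) • f ξ) ξ := by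
  have hexp : HasDerivAt (fun ξ : ℝ ↦ Complex.exp (w * ξ)) (Complex.exp (w * ξ) * w) ξ := by
    simpa using ((hasDerivAt_id (ξ : ℂ)).const_mul w).cexp.comp_ofReal
  rw [smul_smul, mul_comm w (Complex.exp _)]
  exact hexp.smul hf

lemma smul_laplaceIntegral [CompleteSpace E]
    (hderiv : ∀ ξ ∈ Ici (0 : ℝ), HasDerivAt f (f' ξ) ξ)
    (hf : IntegrableOn f (Ioi 0)) (hf' : IntegrableOn f' (Ioi 0)) (hw : w.re ≤ 0) :
    w • laplaceIntegral f w = -f 0 - laplaceIntegral f' w := by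
  have hexp_int := integrableOn_cexp_smul_Ioi hf hw
  have hwexp_int : IntegrableOn (fun ξ : ℝ ↦ w • Complex.exp (w * ξ) • f ξ) (Ioi 0) :=
    hexp_int.smul w
  have hexp_int' := integrableOn_cexp_smul_Ioi hf' hw
  have hprod : ∀ ξ ∈ Ici (0 : ℝ), HasDerivAt (fun ξ : ℝ ↦ Complex.exp (w * ξ) • f ξ)
      (Complex.exp (w * ξ) • f' ξ + w • Complex.exp (w * ξ) • f ξ) ξ :=
    fun ξ hξ ↦ hasDerivAt_cexp_smul (hderiv ξ hξ)
  have hprod_int := hexp_int'.add hwexp_int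
  have hlim := tendsto_zero_of_hasDerivAt_of_integrableOn_Ioi
    (fun ξ hξ ↦ hprod ξ (Ioi_subset_Ici_self hξ)) hprod_int hexp_int
  have hftc := integral_Ioi_of_hasDerivAt_of_tendsto' hprod hprod_int hlim
  rw [integral_add hexp_int' hwexp_int, integral_smul] at hftc
  rw [eq_sub_iff_add_eq']
  simpa [laplaceIntegral] using hftc

lemma laplaceIntegral_one (hw : w.re < 0) : laplaceIntegral (fun _ ↦ (1 : ℂ)) w = -w⁻¹ := by
  simp [laplaceIntegral, integral_exp_mul_complex_Ioi hw, neg_div]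

lemma exists_one_add_norm_pow_mul_norm_laplaceIntegral_le [CompleteSpace E] (hd : 0 < d) (N : ℕ)
    (g : 𝓢(ℝ, E)) (hg : EqOn g 0 (Metric.ball 0 d)) :
    ∃ C : ℝ, ∀ w : ℂ, w.re ≤ 0 →
      (1 + ‖w‖) ^ N * ‖laplaceIntegral g w‖ ≤ C * Real.exp (w.re * d) := by
  induction N generalizing g with
  | zero =>
    have hg' : EqOn g 0 (Ioo 0 d) := hg.mono (by
      rw [Real.ball_eq_Ioo]; exact Ioo_subset_Ioo (by linarith) (by linarith))
    exact ⟨_, fun w hw ↦ by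
      simpa using norm_laplaceIntegral_le g.integrable.integrableOn hg' hw⟩
  | succ N ih =>
    set g' := SchwartzMap.derivCLM ℂ E g
    have hg' : EqOn g' 0 (Metric.ball 0 d) := fun ξ hξ ↦ by
      simpa [g'] using hg.deriv Metric.isOpen_ball hξ
    obtain ⟨C, hC⟩ := ih g hg
    obtain ⟨C', hC'⟩ := ih g' hg'
    refine ⟨C + C', fun w hw ↦ ?_⟩
    have hparts : ‖w‖ * ‖laplaceIntegral g w‖ = ‖laplaceIntegral g' w‖ := by
      rw [← norm_smul, smul_laplaceIntegral (fun ξ _ ↦ g.hasDerivAt ξ)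
        g.integrable.integrableOn g'.integrable.integrableOn hw, hg (Metric.mem_ball_self hd)]
      simp [g', laplaceIntegral]
    calc (1 + ‖w‖) ^ (N + 1) * ‖laplaceIntegral g w‖
        = (1 + ‖w‖) ^ N * ‖laplaceIntegral g w‖ + (1 + ‖w‖) ^ N * ‖laplaceIntegral g' w‖ := by
          rw [← hparts]; ring
      _ ≤ (C + C') * Real.exp (w.re * d) := by linarith [hC w hw, hC' w hw]

end LaplaceIntegral

section TwoSidedExp

/-- The function `ξ ↦ e^{wξ}` for `ξ ≥ 0`, extended to `ξ ≤ 0` by `ξ ↦ e^{-w̄ξ}`; it decays in both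
directions when `w.re < 0`. -/
def twoSidedExp (w : ℂ) (ξ : ℝ) : ℂ :=
  Complex.exp (w.re * |ξ| + w.im * ξ * I)

variable {f : ℝ → E} {w : ℂ} {ξ : ℝ}

lemma continuous_twoSidedExp (w : ℂ) : Continuous (twoSidedExp w) := by
  unfold twoSidedExp
  fun_prop

lemma norm_twoSidedExp (w : ℂ) (ξ : ℝ) : ‖twoSidedExp w ξ‖ = Real.exp (w.re * |ξ|) := by
  simp [twoSidedExp, Complex.norm_exp]

lemma twoSidedExp_of_nonneg (hξ : 0 ≤ ξ) : twoSidedExp w ξ = Complex.exp (w * ξ) := by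
  rw [twoSidedExp, abs_of_nonneg hξ]
  congr 1
  linear_combination (ξ : ℂ) * w.re_add_im

lemma twoSidedExp_neg (w : ℂ) (ξ : ℝ) : twoSidedExp w (-ξ) = twoSidedExp (conj w) ξ := by
  simp [twoSidedExp]

lemma integral_eq_integral_Ioi_add_integral_Ioi_comp_neg {F : Type*} [NormedAddCommGroup F]
    [NormedSpace ℝ F] {f : ℝ → F} (hf : Integrable f) :
    ∫ ξ, f ξ = (∫ ξ in Ioi 0, f ξ) + ∫ ξ in Ioi 0, f (-ξ) := by
  rw [integral_comp_neg_Ioi, neg_zero, add_comm,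
    intervalIntegral.integral_Iic_add_Ioi hf.integrableOn hf.integrableOn]

lemma integral_twoSidedExp_smul (hf : Integrable fun ξ ↦ twoSidedExp w ξ • f ξ) :
    ∫ ξ, twoSidedExp w ξ • f ξ =
      laplaceIntegral f w + laplaceIntegral (fun ξ ↦ f (-ξ)) (conj w) := by
  rw [integral_eq_integral_Ioi_add_integral_Ioi_comp_neg hf]
  congr 1 <;> refine setIntegral_congr_fun measurableSet_Ioi fun ξ hξ ↦ ?_
  · simp only [twoSidedExp_of_nonneg (le_of_lt hξ)]
  · simp only [twoSidedExp_neg, twoSidedExp_of_nonneg (le_of_lt hξ)]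

lemma integrable_twoSidedExp_smul (hf : Integrable f) (hw : w.re ≤ 0) :
    Integrable fun ξ ↦ twoSidedExp w ξ • f ξ := by
  refine hf.bdd_smul 1 (continuous_twoSidedExp w).aestronglyMeasurable (.of_forall fun ξ ↦ ?_)
  rw [norm_twoSidedExp, Real.exp_le_one_iff]
  exact mul_nonpos_of_nonpos_of_nonneg hw (abs_nonneg ξ)

lemma integrable_twoSidedExp (hw : w.re < 0) : Integrable (twoSidedExp w) := by
  have hright {v : ℂ} (hv : v.re < 0) : IntegrableOn (twoSidedExp v) (Ioi 0) :=
    (integrableOn_exp_mul_complex_Ioi hv 0).congr_fun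
      (fun ξ hξ ↦ (twoSidedExp_of_nonneg (le_of_lt hξ)).symm) measurableSet_Ioi
  have hconj : IntegrableOn (twoSidedExp (conj w)) (Ioi 0) := hright (by simpa using hw)
  have hleft : IntegrableOn (twoSidedExp w) (Iio 0) := by
    rw [← neg_zero] at hconj
    simpa [twoSidedExp_neg] using hconj.comp_neg_Iio
  rw [← integrableOn_univ, ← Iic_union_Ioi (a := (0 : ℝ))]
  exact ((integrableOn_Iic_iff_integrableOn_Iio).2 hleft).union (hright hw)

lemma integral_twoSidedExp (hw : w.re < 0) :
    ∫ ξ, twoSidedExp w ξ = ((-(2 * w.re) / normSq w : ℝ) : ℂ) := by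
  have hsplit := integral_twoSidedExp_smul (w := w) (f := fun _ ↦ (1 : ℂ))
    (by simpa using integrable_twoSidedExp hw)
  simp only [smul_eq_mul, mul_one] at hsplit
  rw [hsplit, laplaceIntegral_one hw, laplaceIntegral_one (by simpa using hw),
    Complex.inv_def, Complex.inv_def, Complex.conj_conj, Complex.normSq_conj]
  have hconj := w.add_conj
  push_cast at hconj ⊢
  linear_combination -(normSq w : ℂ)⁻¹ * hconj

end TwoSidedExp

section PoissonKernel

/-- The point `2πi(x + iy)`, at which `twoSidedExp` is the Fourier-side symbol
`ξ ↦ e^{-2πy|ξ| + 2πixξ}` of the Poisson kernel. -/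
def poissonFreq (x y : ℝ) : ℂ :=
  ⟨-(2 * π * y), 2 * π * x⟩

variable {x y : ℝ}

lemma re_poissonFreq_neg (hy : 0 < y) : (poissonFreq x y).re < 0 := by
  simp only [poissonFreq]
  linarith [mul_pos two_pi_pos hy]

lemma abs_left_le_norm_poissonFreq (x y : ℝ) : |x| ≤ ‖poissonFreq x y‖ := by
  have him : 2 * π * |x| ≤ ‖poissonFreq x y‖ := by
    simpa [poissonFreq, abs_mul, abs_of_pos pi_pos] using abs_im_le_norm (poissonFreq x y)
  nlinarith [abs_nonneg x, pi_gt_three]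

lemma abs_right_le_norm_poissonFreq (x y : ℝ) : |y| ≤ ‖poissonFreq x y‖ := by
  have hre : 2 * π * |y| ≤ ‖poissonFreq x y‖ := by
    simpa [poissonFreq, abs_mul, abs_of_pos pi_pos] using abs_re_le_norm (poissonFreq x y)
  nlinarith [abs_nonneg y, pi_gt_three]

lemma integral_twoSidedExp_poissonFreq (hy : 0 < y) :
    ∫ ξ, twoSidedExp (poissonFreq x y) ξ = poissonKer y x := by
  rw [integral_twoSidedExp (re_poissonFreq_neg hy), poissonKer, normSq_apply]
  congr 1
  simp only [poissonFreq]
  have hnorm : -(2 * π * y) * -(2 * π * y) + 2 * π * x * (2 * π * x) =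
      (2 * π) ^ 2 * (x ^ 2 + y ^ 2) := by ring
  rw [hnorm]
  field_simp

lemma fourier_twoSidedExp_poissonFreq (hy : 0 < y) (t : ℝ) :
    𝓕 (twoSidedExp (poissonFreq x y)) t = poissonKer y (x - t) := by
  rw [← integral_twoSidedExp_poissonFreq hy, Real.fourier_eq']
  congr 1
  ext ξ
  rw [smul_eq_mul, twoSidedExp, twoSidedExp, ← Complex.exp_add]
  congr 1
  simp only [neg_mul, RCLike.inner_apply, ringHom_apply, ofReal_neg, ofReal_mul, ofReal_ofNat,
    poissonFreq, ofReal_sub]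
  ring

lemma integral_poissonKer_smul_eq [CompleteSpace E] {f : ℝ → E} (hf : Integrable f) (hy : 0 < y) :
    ∫ t, (poissonKer y (x - t) : ℂ) • f t = ∫ ξ, twoSidedExp (poissonFreq x y) ξ • 𝓕 f ξ := by
  have hflip := VectorFourier.integral_fourierIntegral_smul_eq_flip (L := innerₗ ℝ) (μ := volume)
    (ν := volume) continuous_fourierChar continuous_inner
    (integrable_twoSidedExp (re_poissonFreq_neg (x := x) hy)) hf
  rw [flip_innerₗ] at hflip
  simp only [← fourier_twoSidedExp_poissonFreq hy]
  exact hflip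

lemma exists_one_add_norm_pow_mul_norm_integral_poissonKer_smul_le [CompleteSpace E]
    (φ : 𝓢(ℝ, E)) {d : ℝ} (hd : 0 < d) (hφ : EqOn (𝓕 ⇑φ) 0 (Metric.ball 0 d)) (N : ℕ) :
    ∃ C : ℝ, 0 < C ∧ ∀ x y : ℝ, 0 < y →
      (1 + ‖poissonFreq x y‖) ^ N * ‖∫ t, (poissonKer y (x - t) : ℂ) • φ t‖
        ≤ C * Real.exp (-(2 * π * d * y)) := by
  let g : 𝓢(ℝ, E) := 𝓕 φ
  let gneg : 𝓢(ℝ, E) := SchwartzMap.compCLMOfContinuousLinearEquiv ℂ (.neg ℝ) g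
  have hgneg : EqOn gneg 0 (Metric.ball 0 d) := fun ξ hξ ↦ hφ (x := -ξ) (by simpa using hξ)
  obtain ⟨C₁, hC₁⟩ := exists_one_add_norm_pow_mul_norm_laplaceIntegral_le hd N g hφ
  obtain ⟨C₂, hC₂⟩ := exists_one_add_norm_pow_mul_norm_laplaceIntegral_le hd N gneg hgneg
  refine ⟨max (C₁ + C₂) 1, by positivity, fun x y hy ↦ ?_⟩
  set w := poissonFreq x y
  have hw : w.re ≤ 0 := (re_poissonFreq_neg hy).le
  have hsplit : ∫ t, (poissonKer y (x - t) : ℂ) • φ t =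
      laplaceIntegral g w + laplaceIntegral gneg (conj w) := by
    rw [integral_poissonKer_smul_eq φ.integrable hy]
    exact integral_twoSidedExp_smul (integrable_twoSidedExp_smul g.integrable hw)
  have hright := hC₁ w hw
  have hleft := hC₂ (conj w) (by simpa using hw)
  rw [conj_re, norm_conj] at hleft
  have hexp : w.re * d = -(2 * π * d * y) := by simp only [w, poissonFreq]; ring
  rw [hsplit, ← hexp]
  calc (1 + ‖w‖) ^ N * ‖laplaceIntegral g w + laplaceIntegral gneg (conj w)‖
      ≤ (1 + ‖w‖) ^ N * (‖laplaceIntegral g w‖ + ‖laplaceIntegral gneg (conj w)‖) := by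
        gcongr; exact norm_add_le _ _
    _ ≤ (C₁ + C₂) * Real.exp (w.re * d) := by linarith
    _ ≤ max (C₁ + C₂) 1 * Real.exp (w.re * d) := by gcongr; exact le_max_left _ _

end PoissonKernel

lemma exists_norm_eval_le_mul_one_add_norm_pow {𝕜 : Type*} [NormedField 𝕜] (p : 𝕜[X]) :
    ∃ A : ℝ, 0 < A ∧ ∀ x : 𝕜, ‖p.eval x‖ ≤ A * (1 + ‖x‖) ^ p.natDegree := by
  set S := ∑ k ∈ Finset.range (p.natDegree + 1), ‖p.coeff k‖
  refine ⟨S + 1, by positivity, fun x ↦ ?_⟩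
  have hx : 1 ≤ 1 + ‖x‖ := le_add_of_nonneg_right (norm_nonneg x)
  calc ‖p.eval x‖ = ‖∑ k ∈ Finset.range (p.natDegree + 1), p.coeff k * x ^ k‖ := by
        rw [Polynomial.eval_eq_sum_range]
    _ ≤ ∑ k ∈ Finset.range (p.natDegree + 1), ‖p.coeff k‖ * (1 + ‖x‖) ^ p.natDegree := by
        refine norm_sum_le_of_le _ fun k hk ↦ ?_
        rw [norm_mul, norm_pow]
        gcongr
        calc ‖x‖ ^ k ≤ (1 + ‖x‖) ^ k := by gcongr; linarith
          _ ≤ (1 + ‖x‖) ^ p.natDegree := pow_le_pow_right₀ hx (Finset.mem_range_succ_iff.1 hk)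
    _ = S * (1 + ‖x‖) ^ p.natDegree := (Finset.sum_mul ..).symm
    _ ≤ (S + 1) * (1 + ‖x‖) ^ p.natDegree := by gcongr; linarith

lemma eqOn_zero_ball_infDist_support {X F : Type*} [PseudoMetricSpace X] [Zero F] (f : X → F)
    (x : X) : EqOn f 0 (Metric.ball x (Metric.infDist x (Function.support f))) := fun _ hy ↦
  Function.notMem_support.1 (Metric.notMem_of_dist_lt_infDist (Metric.mem_ball'.1 hy))

lemma div_one_add_le_mul_one_add_pow_div_sqrt {a y : ℝ} (ha : 0 ≤ a) (hy : 0 < y) (n : ℕ) :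
    a / (1 + y) ≤ a * (1 + y ^ n) / √y := by
  have hsqrt : √y ≤ 1 + y := Real.sqrt_le_iff.2 ⟨by positivity, by nlinarith⟩
  gcongr
  exact le_mul_of_one_le_right ha (le_add_of_nonneg_right (by positivity))

theorem stmt_10_general [CompleteSpace E] (φ : 𝓢(ℝ, E)) {d : ℝ} (hd : 0 < d)
    (hφ : EqOn (𝓕 ⇑φ) 0 (Metric.ball 0 d)) (p : ℂ[X]) (N : ℕ) :
    ∃ C : ℝ, 0 < C ∧ ∀ x y : ℝ, 0 < y →
      ‖p.eval (x : ℂ) • ∫ t, (poissonKer y (x - t) : ℂ) • φ t‖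
        ≤ C * Real.exp (-(2 * π * d * y)) / (1 + y) ^ N := by
  obtain ⟨A, hA, hp⟩ := exists_norm_eval_le_mul_one_add_norm_pow p
  obtain ⟨C, hC, hF⟩ :=
    exists_one_add_norm_pow_mul_norm_integral_poissonKer_smul_le φ hd hφ (p.natDegree + N)
  refine ⟨A * C, mul_pos hA hC, fun x y hy ↦ ?_⟩
  set F := ∫ t, (poissonKer y (x - t) : ℂ) • φ t
  set w := poissonFreq x y
  have hx : ‖(x : ℂ)‖ ≤ ‖w‖ := by simpa using abs_left_le_norm_poissonFreq x y
  have hyw : y ≤ ‖w‖ := (le_abs_self y).trans (abs_right_le_norm_poissonFreq x y)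
  rw [le_div_iff₀ (by positivity), norm_smul]
  calc ‖p.eval (x : ℂ)‖ * ‖F‖ * (1 + y) ^ N
      ≤ A * (1 + ‖w‖) ^ p.natDegree * ‖F‖ * (1 + ‖w‖) ^ N := by
        gcongr
        exact (hp x).trans (by gcongr)
    _ = A * ((1 + ‖w‖) ^ (p.natDegree + N) * ‖F‖) := by ring
    _ ≤ A * (C * Real.exp (-(2 * π * d * y))) := mul_le_mul_of_nonneg_left (hF x y hy) hA.le
    _ = A * C * Real.exp (-(2 * π * d * y)) := by ring

/-- Localization lemma: if `φ` is Schwartz with `d = dist(supp φ̂, 0) > 0` and `p` is a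
polynomial of degree `n`, then `|p(x)(φ * P_y)(x)| ≲ (1+yⁿ) e^{-2πdy}/√y` on `ℂ_+`. -/
theorem stmt_10 (φ : SchwartzMap ℝ ℂ) (d : ℝ)
    (hd : d = Metric.infDist 0 (Function.support (𝓕 ⇑φ)))
    (hd0 : 0 < d) (p : Polynomial ℂ) (n : ℕ) (hn : p.natDegree = n) :
    ∃ C : ℝ, 0 < C ∧ ∀ x y : ℝ, 0 < y →
      ‖p.eval (x : ℂ) * ∫ t : ℝ, φ t * ((poissonKer y (x - t) : ℝ) : ℂ)‖
        ≤ C * (1 + y ^ n) * Real.exp (-(2 * π * d * y)) / Real.sqrt y := by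
  obtain ⟨C, hC, hbound⟩ := stmt_10_general φ hd0 (hd ▸ eqOn_zero_ball_infDist_support _ 0) p 1
  refine ⟨C, hC, fun x y hy ↦ ?_⟩
  rw [mul_right_comm C]
  refine le_trans ?_ (div_one_add_le_mul_one_add_pow_div_sqrt (by positivity) hy n)
  simpa only [smul_eq_mul, mul_comm (φ _), pow_one] using hbound x y hy
end
end
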